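/- For every k > 0 and every ψ ≥ 0, ∫_k^ψ (ln μ − ln k)⁺ dμ ≥ 2 [(√ψ − √k)⁺]², where a⁺ = max(a,0); explicitly, for ψ ≥ k one has ∫_k^ψ ln(μ/k) dμ ≥ 2(√ψ − √k)², while for ψ < k both sides equal 0. -/

import Mathlib

open MeasureTheory

/-!
The inequality `log y ≥ 1 - 1 / y` at `y = √(x / k)` gives
`log (x / k) ≥ 2 (√x - √k) / √x`, and the right-hand side is exactly the derivative of
`x ↦ 2 (√x - √k) ^ 2`, which vanishes at `k`. Integrating from `k` to `ψ` gives the bound.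
-/

open Set

lemma two_mul_one_sub_inv_sqrt_le_log {x : ℝ} (hx : 0 < x) :
    2 * (1 - (√x)⁻¹) ≤ Real.log x := by
  have h : 1 - (√x)⁻¹ ≤ Real.log √x := Real.one_sub_inv_le_log_of_pos (Real.sqrt_pos.2 hx)
  rw [Real.log_sqrt hx.le] at h
  linarith

lemma two_mul_sqrt_sub_sqrt_div_sqrt_le_log_div {k x : ℝ} (hk : 0 < k) (hx : 0 < x) :
    2 * (√x - √k) / √x ≤ Real.log (x / k) :=
  calc 2 * (√x - √k) / √x = 2 * (1 - (√(x / k))⁻¹) := by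
        rw [Real.sqrt_div hx.le, inv_div, mul_div_assoc, sub_div, div_self (Real.sqrt_pos.2 hx).ne']
    _ ≤ Real.log (x / k) := two_mul_one_sub_inv_sqrt_le_log (div_pos hx hk)

lemma hasDerivAt_two_mul_sqrt_sub_sq (c : ℝ) {x : ℝ} (hx : x ≠ 0) :
    HasDerivAt (fun y => 2 * (√y - c) ^ 2) (2 * (√x - c) / √x) x := by
  refine ((((Real.hasDerivAt_sqrt hx).sub_const c).fun_pow 2).const_mul 2).congr_deriv ?_
  ring

lemma intervalIntegrable_log_div {c : ℝ} (hc : c ≠ 0) (a b : ℝ) :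
    IntervalIntegrable (fun x => Real.log (x / c)) volume a b := by
  have h : IntervalIntegrable Real.log volume (a * c⁻¹) (b * c⁻¹) :=
    intervalIntegral.intervalIntegrable_log'
  simpa [div_eq_mul_inv, hc] using h.comp_mul_right (c := c⁻¹)

lemma two_mul_sqrt_sub_sq_sub_le_integral_log_div {k a b : ℝ} (hk : 0 < k) (ha : 0 ≤ a)
    (hab : a ≤ b) :
    2 * (√b - √k) ^ 2 - 2 * (√a - √k) ^ 2 ≤ ∫ x in a..b, Real.log (x / k) := by
  have hderiv : ∀ x ∈ Ioo a b,
      HasDerivWithinAt (fun y => 2 * (√y - √k) ^ 2) (2 * (√x - √k) / √x) (Ioi x) x := fun x hx =>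
    (hasDerivAt_two_mul_sqrt_sub_sq √k (ha.trans_lt hx.1).ne').hasDerivWithinAt
  have hint : IntegrableOn (fun x => Real.log (x / k)) (Icc a b) :=
    (intervalIntegrable_iff_integrableOn_Icc_of_le hab).1 (intervalIntegrable_log_div hk.ne' a b)
  exact intervalIntegral.sub_le_integral_of_hasDeriv_right_of_le hab (by fun_prop) hderiv hint
    fun x hx => two_mul_sqrt_sub_sqrt_div_sqrt_le_log_div hk (ha.trans_lt hx.1)

lemma integral_max_sub_eq_integral_sub {f : ℝ → ℝ} {a b : ℝ} (hab : a ≤ b)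
    (hf : MonotoneOn f (Icc a b)) :
    ∫ x in a..b, max (f x - f a) 0 = ∫ x in a..b, (f x - f a) := by
  refine intervalIntegral.integral_congr fun x hx => ?_
  rw [uIcc_of_le hab] at hx
  exact max_eq_left (sub_nonneg.2 (hf (left_mem_Icc.2 hab) hx hx.1))

lemma integral_max_sub_eq_zero {f : ℝ → ℝ} {a b : ℝ} (hba : b ≤ a)
    (hf : MonotoneOn f (Ioc b a)) :
    ∫ x in a..b, max (f x - f a) 0 = 0 := by
  refine intervalIntegral.integral_zero_ae (.of_forall fun x hx => ?_)
  rw [uIoc_of_ge hba] at hx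
  exact max_eq_right (sub_nonpos.2 (hf hx (right_mem_Ioc.2 (hx.1.trans_le hx.2)) hx.2))

lemma integral_max_log_sub_log {a b : ℝ} (ha : 0 < a) (hab : a ≤ b) :
    ∫ x in a..b, max (Real.log x - Real.log a) 0 = ∫ x in a..b, Real.log (x / a) := by
  have hpos : ∀ x ∈ Icc a b, 0 < x := fun x hx => ha.trans_le hx.1
  rw [integral_max_sub_eq_integral_sub hab (Real.strictMonoOn_log.monotoneOn.mono hpos)]
  refine intervalIntegral.integral_congr fun x hx => ?_
  rw [uIcc_of_le hab] at hx
  exact (Real.log_div (hpos x hx).ne' ha.ne').symm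

/-- For every `k > 0` and `ψ ≥ 0`,
`∫_k^ψ (ln μ − ln k)⁺ dμ ≥ 2 [(√ψ − √k)⁺]²`; explicitly, for `ψ ≥ k` one has
`∫_k^ψ ln(μ/k) dμ ≥ 2(√ψ − √k)²`, while for `ψ < k` both sides vanish. -/
theorem log_truncation_lower_bound (k ψ : ℝ) (hk : 0 < k) (hψ : 0 ≤ ψ) :
    (2 * (max (Real.sqrt ψ - Real.sqrt k) 0) ^ 2
        ≤ ∫ μ in k..ψ, max (Real.log μ - Real.log k) 0) ∧
      (k ≤ ψ →
        2 * (Real.sqrt ψ - Real.sqrt k) ^ 2 ≤ ∫ μ in k..ψ, Real.log (μ / k)) ∧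
      (ψ < k →
        (∫ μ in k..ψ, max (Real.log μ - Real.log k) 0) = 0 ∧
          max (Real.sqrt ψ - Real.sqrt k) 0 = 0) := by
  have above (h : k ≤ ψ) : 2 * (√ψ - √k) ^ 2 ≤ ∫ μ in k..ψ, Real.log (μ / k) := by
    simpa using two_mul_sqrt_sub_sq_sub_le_integral_log_div hk hk.le h
  have below (h : ψ < k) : (∫ μ in k..ψ, max (Real.log μ - Real.log k) 0) = 0 ∧
      max (√ψ - √k) 0 = 0 := by
    -- `Ioc ψ k` excludes `ψ`, which may be `0`, where `Real.log` takes a junk value.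
    have hlog : MonotoneOn Real.log (Ioc ψ k) :=
      Real.strictMonoOn_log.monotoneOn.mono fun x hx => hψ.trans_lt hx.1
    exact ⟨integral_max_sub_eq_zero h.le hlog,
      max_eq_right (sub_nonpos.2 (Real.sqrt_le_sqrt h.le))⟩
  refine ⟨?_, above, below⟩
  rcases le_or_gt k ψ with h | h
  · rw [integral_max_log_sub_log hk h, max_eq_left (sub_nonneg.2 (Real.sqrt_le_sqrt h))]
    exact above h
  · simp [below h]
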